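/- For every α' ∈ (1/2, 1), ∫₀^{1/2} ( (1−l)^{2α'} + l^{2α'} − 1 ) / ( l^{α'+1}·(1−l)^{α'+1} ) dl = cos(π α') · ∫₀^∞ ( (1+l)^{2α'} + l^{2α'} − 1 ) / ( l^{α'+1}·(1+l)^{α'+1} ) dl. Equivalently, the unique ratio A₊/A₋ > 0 for which A₊·I₁(α') + A₋·I₂(α') = 0 is A₊/A₋ = −cos(π α'). -/

import Mathlib

open MeasureTheory Set Filter Topology

/-- The integrand of the real Beta integral, with exponents greater than `-1`, is integrable. -/
theorem intervalIntegrable_rpow_mul_one_sub_rpow {r s : ℝ} (hr : -1 < r) (hs : -1 < s) :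
    IntervalIntegrable (fun x : ℝ => x ^ r * (1 - x) ^ s) volume 0 1 := by
  have h := Complex.betaIntegral_convergent (u := ((r + 1 : ℝ) : ℂ)) (v := ((s + 1 : ℝ) : ℂ))
    (by rw [Complex.ofReal_re]; linarith) (by rw [Complex.ofReal_re]; linarith)
  rw [intervalIntegrable_iff_integrableOn_Ioo_of_le zero_le_one] at h ⊢
  refine h.re.congr ?_
  filter_upwards [ae_restrict_mem measurableSet_Ioo] with x hx
  rw [← Complex.ofReal_one, ← Complex.ofReal_sub, ← Complex.ofReal_sub, ← Complex.ofReal_sub,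
    ← Complex.ofReal_cpow hx.1.le, ← Complex.ofReal_cpow (sub_nonneg.2 hx.2.le),
    ← Complex.ofReal_mul, RCLike.re_to_complex, Complex.ofReal_re]
  simp

/-- The real Beta integral in terms of the Gamma function. -/
theorem integral_rpow_mul_one_sub_rpow {r s : ℝ} (hr : -1 < r) (hs : -1 < s) :
    ∫ x in (0 : ℝ)..1, x ^ r * (1 - x) ^ s =
      Real.Gamma (r + 1) * Real.Gamma (s + 1) / Real.Gamma (r + s + 2) := by
  have h := Complex.betaIntegral_eq_Gamma_mul_div ((r + 1 : ℝ) : ℂ) ((s + 1 : ℝ) : ℂ)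
    (by rw [Complex.ofReal_re]; linarith) (by rw [Complex.ofReal_re]; linarith)
  rw [← Complex.ofReal_add, Complex.Gamma_ofReal, Complex.Gamma_ofReal, Complex.Gamma_ofReal,
    ← Complex.ofReal_mul, ← Complex.ofReal_div, show r + 1 + (s + 1) = r + s + 2 by ring] at h
  rw [← Complex.ofReal_inj, ← h, ← intervalIntegral.integral_ofReal, Complex.betaIntegral]
  refine intervalIntegral.integral_congr fun x hx => ?_
  rw [uIcc_of_le zero_le_one] at hx
  simp [Complex.ofReal_cpow hx.1, Complex.ofReal_cpow (sub_nonneg.2 hx.2)]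

/-- By the symmetry `x ↦ 1 - x`, half of the symmetric Beta integral comes from `(0, 1/2)`. -/
theorem integral_zero_half_rpow_mul_one_sub_rpow {r : ℝ} (hr : -1 < r) :
    ∫ x in (0 : ℝ)..(1 / 2), x ^ r * (1 - x) ^ r =
      (∫ x in (0 : ℝ)..1, x ^ r * (1 - x) ^ r) / 2 := by
  have hI := intervalIntegrable_rpow_mul_one_sub_rpow hr hr
  have h := intervalIntegral.integral_add_adjacent_intervals
    (hI.mono_set (c := 0) (d := 1 / 2) (uIcc_subset_uIcc (by simp) (by
      rw [uIcc_of_le zero_le_one]; constructor <;> norm_num)))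
    (hI.mono_set (c := 1 / 2) (d := 1) (uIcc_subset_uIcc (by
      rw [uIcc_of_le zero_le_one]; constructor <;> norm_num) (by simp)))
  have hs : ∫ x in (1 / 2 : ℝ)..1, x ^ r * (1 - x) ^ r =
      ∫ x in (0 : ℝ)..(1 / 2), x ^ r * (1 - x) ^ r := by
    have := intervalIntegral.integral_comp_sub_left (a := 0) (b := 1 / 2)
      (fun x : ℝ => x ^ r * (1 - x) ^ r) 1
    norm_num at this ⊢
    rw [← this]
    exact intervalIntegral.integral_congr fun x _ => mul_comm _ _
  linarith

/-- Bernoulli's inequality bounds the defect of `(1 - x) ^ p` from `1`. -/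
theorem one_sub_one_sub_rpow_mem_Icc {p x : ℝ} (hp : 1 ≤ p) (hx : x ∈ Icc (0 : ℝ) 1) :
    1 - (1 - x) ^ p ∈ Icc 0 (p * x) := by
  constructor
  · have := Real.rpow_le_one (sub_nonneg.2 hx.2) (by linarith [hx.1]) (by linarith : 0 ≤ p)
    linarith
  · have := one_add_mul_self_le_rpow_one_add (s := -x) (by linarith [hx.2]) hp
    rw [← sub_eq_add_neg] at this
    linarith

/-- A function bounded by positive powers of the argument tends to `0` at `0`. -/
theorem tendsto_zero_of_abs_le_rpow {f : ℝ → ℝ} {C D r s : ℝ} (hr : 0 < r) (hs : 0 < s)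
    {b : ℝ} (hb : 0 < b) (hf : ∀ x ∈ Ioo 0 b, |f x| ≤ C * x ^ r + D * x ^ s) :
    Tendsto f (𝓝[>] 0) (𝓝 0) := by
  have hpow : ∀ {t : ℝ}, 0 < t → Tendsto (fun x : ℝ => x ^ t) (𝓝[>] 0) (𝓝 0) := fun {t} ht => by
    have := (Real.continuousAt_rpow_const 0 t (Or.inr ht.le)).tendsto
    rw [Real.zero_rpow ht.ne'] at this
    exact this.mono_left nhdsWithin_le_nhds
  refine squeeze_zero_norm' ?_ (a := fun x => C * x ^ r + D * x ^ s) ?_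
  · filter_upwards [Ioo_mem_nhdsGT hb] with x hx using hf x hx
  · simpa using ((hpow hr).const_mul C).add ((hpow hs).const_mul D)

/-- A measurable function bounded by powers greater than `-1` is integrable. -/
theorem intervalIntegrable_of_abs_le_rpow {f : ℝ → ℝ} (hm : Measurable f) {C D r s b : ℝ}
    (hr : -1 < r) (hs : -1 < s) (hb : 0 ≤ b)
    (hf : ∀ x ∈ Ioo 0 b, |f x| ≤ C * x ^ r + D * x ^ s) :
    IntervalIntegrable f volume 0 b := by
  have h := ((intervalIntegral.intervalIntegrable_rpow' (a := 0) (b := b) hr).const_mul C).add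
    ((intervalIntegral.intervalIntegrable_rpow' (a := 0) (b := b) hs).const_mul D)
  rw [intervalIntegrable_iff_integrableOn_Ioo_of_le hb] at h ⊢
  refine Integrable.mono' h hm.aestronglyMeasurable ?_
  filter_upwards [ae_restrict_mem measurableSet_Ioo] with x hx using hf x hx

/-- The change of variables `l = (1 - u)⁻¹ - 1` from `(0, 1)` to the half-line. -/
theorem integral_Ioi_eq_integral_one_sub_inv (g : ℝ → ℝ) :
    ∫ l in Ioi (0 : ℝ), g l = ∫ u in Ioo (0 : ℝ) 1, ((1 - u) ^ 2)⁻¹ * g ((1 - u)⁻¹ - 1) := by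
  have himg : (fun u : ℝ => (1 - u)⁻¹ - 1) '' Ioo 0 1 = Ioi 0 := by
    ext y
    constructor
    · rintro ⟨u, hu, rfl⟩
      have h : 0 < 1 - u := by linarith [hu.2]
      have := (one_lt_inv₀ h).2 (by linarith [hu.1])
      exact sub_pos.2 this
    · intro hy
      have hy : 0 < y := hy
      have h1 : (1 + y)⁻¹ < 1 := inv_lt_one_of_one_lt₀ (by linarith)
      have h2 : 0 < (1 + y)⁻¹ := by positivity
      exact ⟨1 - (1 + y)⁻¹, ⟨by linarith, by linarith⟩, by simp⟩
  rw [← himg, integral_image_eq_integral_abs_deriv_smul (f' := fun u => ((1 - u) ^ 2)⁻¹)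
    measurableSet_Ioo]
  · simp
  · intro u hu
    have h : 1 - u ≠ 0 := by linarith [hu.2]
    refine HasDerivAt.hasDerivWithinAt ?_
    have := (((hasDerivAt_id u).const_sub 1).inv h).sub_const 1
    convert! this using 1
    simp [one_div]
  · intro u _ v _ h
    simpa using h

/-- Closed form of the integral over positive jumps. -/
theorem integral_Ioi_conservation {a : ℝ} (ha : a ∈ Ioo (1 / 2 : ℝ) 1) :
    ∫ l in Ioi (0 : ℝ), ((1 + l) ^ (2 * a) + l ^ (2 * a) - 1) / (l ^ (a + 1) * (1 + l) ^ (a + 1)) =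
      2 * (Real.Gamma (1 - a) * Real.Gamma (2 * a) / Real.Gamma (1 + a)) := by
  obtain ⟨h1, h2⟩ := ha
  have hsub : ∫ l in Ioi (0 : ℝ),
      ((1 + l) ^ (2 * a) + l ^ (2 * a) - 1) / (l ^ (a + 1) * (1 + l) ^ (a + 1)) =
      ∫ u in (0 : ℝ)..1, (u ^ (-a - 1) * (1 - (1 - u) ^ (2 * a)) + u ^ (a - 1)) := by
    rw [integral_Ioi_eq_integral_one_sub_inv, intervalIntegral.integral_of_le zero_le_one,
      integral_Ioc_eq_integral_Ioo]
    refine setIntegral_congr_fun measurableSet_Ioo fun u hu => ?_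
    have hu0 : 0 < u := hu.1
    have hv : 0 < 1 - u := by linarith [hu.2]
    have e1 : (1 - u)⁻¹ - 1 = u * (1 - u)⁻¹ := by field_simp; ring
    have e2 : 1 + u * (1 - u)⁻¹ = (1 - u)⁻¹ := by field_simp; ring
    simp only [e1, e2]
    rw [Real.mul_rpow hu0.le (inv_nonneg.2 hv.le), Real.mul_rpow hu0.le (inv_nonneg.2 hv.le),
      Real.inv_rpow hv.le, Real.inv_rpow hv.le]
    have p1 : u ^ (2 * a) = u ^ a * u ^ a := by rw [← Real.rpow_add hu0]; ring_nf
    have p2 : (1 - u) ^ (2 * a) = (1 - u) ^ a * (1 - u) ^ a := by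
      rw [← Real.rpow_add hv]; ring_nf
    have p3 : u ^ (-a - 1) = (u ^ a)⁻¹ * u⁻¹ := by
      rw [Real.rpow_sub_one hu0.ne', Real.rpow_neg hu0.le]; rfl
    have q1 := Real.rpow_pos_of_pos hu0 a
    have q2 := Real.rpow_pos_of_pos hv a
    rw [p1, p2, p3, Real.rpow_add_one hu0.ne', Real.rpow_add_one hv.ne', Real.rpow_sub_one hu0.ne']
    field_simp
    ring
  have hf : IntervalIntegrable (fun u : ℝ => u ^ (-a - 1) * (1 - (1 - u) ^ (2 * a)) + u ^ (a - 1))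
      volume 0 1 := by
    refine intervalIntegrable_of_abs_le_rpow (by fun_prop) (C := 2 * a) (D := 1) (r := -a)
      (s := a - 1) (by linarith) (by linarith) zero_le_one fun u hu => ?_
    have hb := one_sub_one_sub_rpow_mem_Icc (p := 2 * a) (by linarith) (Ioo_subset_Icc_self hu)
    have q1 := Real.rpow_pos_of_pos hu.1 (-a - 1)
    have q2 := Real.rpow_pos_of_pos hu.1 (a - 1)
    have e : u ^ (-a) = u ^ (-a - 1) * u := by
      rw [← Real.rpow_add_one hu.1.ne']; ring_nf
    rw [abs_of_nonneg (add_nonneg (mul_nonneg q1.le hb.1) q2.le), e]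
    nlinarith [mul_le_mul_of_nonneg_left hb.2 q1.le]
  have hg := intervalIntegrable_rpow_mul_one_sub_rpow (r := -a) (s := 2 * a - 1) (by linarith)
    (by linarith)
  have hFTC := intervalIntegral.integral_eq_sub_of_hasDerivAt_of_tendsto zero_lt_one
    (f := fun u : ℝ => (u ^ a - u ^ (-a) * (1 - (1 - u) ^ (2 * a))) / a) (fa := 0) (fb := 0)
    (f' := fun u => u ^ (-a - 1) * (1 - (1 - u) ^ (2 * a)) + u ^ (a - 1)
      - 2 * (u ^ (-a) * (1 - u) ^ (2 * a - 1))) ?_ (hf.sub (hg.const_mul 2)) ?_ ?_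
  · rw [intervalIntegral.integral_sub hf (hg.const_mul 2), intervalIntegral.integral_const_mul,
      integral_rpow_mul_one_sub_rpow (by linarith) (by linarith)] at hFTC
    rw [hsub]
    ring_nf at hFTC ⊢
    linarith
  · intro u hu
    have hv : 1 - u ≠ 0 := by linarith [hu.2]
    have d1 := Real.hasDerivAt_rpow_const (x := u) (p := a) (Or.inl hu.1.ne')
    have d2 := Real.hasDerivAt_rpow_const (x := u) (p := -a) (Or.inl hu.1.ne')
    have d3 := (((hasDerivAt_id u).const_sub 1).rpow_const (p := 2 * a) (Or.inl hv)).const_sub 1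
    convert! (d1.sub (d2.mul d3)).div_const a using 1
    simp only [id]
    field_simp
    ring
  · refine tendsto_zero_of_abs_le_rpow (C := 2) (D := 1 / a) (r := 1 - a) (s := a)
      (by linarith) (by linarith) zero_lt_one fun u hu => ?_
    have hb := one_sub_one_sub_rpow_mem_Icc (p := 2 * a) (by linarith) (Ioo_subset_Icc_self hu)
    have q1 := Real.rpow_pos_of_pos hu.1 (-a)
    have q2 := Real.rpow_pos_of_pos hu.1 a
    have e : u ^ (1 - a) = u ^ (-a) * u := by
      rw [← Real.rpow_add_one hu.1.ne']; ring_nf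
    have h0 : 0 < a := by linarith
    rw [abs_div, abs_of_pos h0, div_le_iff₀ h0, e]
    have hm := mul_le_mul_of_nonneg_left hb.2 q1.le
    have hn := mul_nonneg q1.le hb.1
    have : (2 * (u ^ (-a) * u) + 1 / a * u ^ a) * a = u ^ (-a) * (2 * a * u) + u ^ a := by
      field_simp
    rw [this, abs_le]
    constructor <;> linarith
  · have hc : ContinuousAt (fun u : ℝ => (u ^ a - u ^ (-a) * (1 - (1 - u) ^ (2 * a))) / a) 1 := by
      have c1 := Real.continuousAt_rpow_const 1 a (Or.inl one_ne_zero)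
      have c2 := Real.continuousAt_rpow_const 1 (-a) (Or.inl one_ne_zero)
      have c3 : ContinuousAt (fun u : ℝ => (1 - u) ^ (2 * a)) 1 :=
        (continuousAt_const.sub continuousAt_id).rpow_const (Or.inr (by linarith))
      exact (c1.sub (c2.mul (continuousAt_const.sub c3))).div_const a
    have := hc.tendsto.mono_left (nhdsWithin_le_nhds (s := Iio 1))
    simpa [Real.zero_rpow (show 2 * a ≠ 0 by linarith)] using this

/-- Closed form of the integral over negative jumps. -/
theorem integral_Ioo_zero_half_conservation {a : ℝ} (ha : a ∈ Ioo (1 / 2 : ℝ) 1) :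
    ∫ l in Ioo (0 : ℝ) (1 / 2),
      ((1 - l) ^ (2 * a) + l ^ (2 * a) - 1) / (l ^ (a + 1) * (1 - l) ^ (a + 1)) =
      -((2 * a - 1) / a) * (Real.Gamma (1 - a) * Real.Gamma (1 - a) / Real.Gamma (2 - 2 * a)) := by
  obtain ⟨h1, h2⟩ := ha
  have h0 : 0 < a := by linarith
  have hmem : ∀ {l : ℝ}, l ∈ Ioo (0 : ℝ) (1 / 2) → l ∈ Icc (0 : ℝ) 1 := fun hl =>
    ⟨hl.1.le, by linarith [hl.2]⟩
  have hf : IntervalIntegrable (fun l : ℝ =>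
      ((1 - l) ^ (2 * a) + l ^ (2 * a) - 1) / (l ^ (a + 1) * (1 - l) ^ (a + 1)))
      volume 0 (1 / 2) := by
    refine intervalIntegrable_of_abs_le_rpow (by fun_prop) (C := 8) (D := 4) (r := -a)
      (s := a - 1) (by linarith) (by linarith) (by norm_num) fun l hl => ?_
    have hb := one_sub_one_sub_rpow_mem_Icc (p := 2 * a) (by linarith) (hmem hl)
    have hv : 0 < 1 - l := by linarith [hl.2]
    have q1 := Real.rpow_pos_of_pos hl.1 (a + 1)
    have q2 := Real.rpow_pos_of_pos hv (a + 1)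
    have q3 := Real.rpow_pos_of_pos hl.1 (2 * a)
    have hquarter : 1 / 4 ≤ (1 - l) ^ (a + 1) := by
      have := Real.rpow_le_rpow_of_exponent_ge hv (by linarith [hl.1])
        (show a + 1 ≤ 2 by linarith)
      rw [Real.rpow_two] at this
      nlinarith [hl.2]
    have e1 : l ^ (-a) * l ^ (a + 1) = l := by
      rw [← Real.rpow_add hl.1]; simp
    have e2 : l ^ (a - 1) * l ^ (a + 1) = l ^ (2 * a) := by
      rw [← Real.rpow_add hl.1]; ring_nf
    have hnum : |(1 - l) ^ (2 * a) + l ^ (2 * a) - 1| ≤ 2 * l + l ^ (2 * a) := by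
      have := mul_le_mul_of_nonneg_right h2.le hl.1.le
      rw [abs_le]
      constructor <;> linarith [hb.1, hb.2, hl.1]
    rw [abs_div, abs_of_pos (mul_pos q1 q2), div_le_iff₀ (mul_pos q1 q2)]
    calc |(1 - l) ^ (2 * a) + l ^ (2 * a) - 1| ≤ 2 * l + l ^ (2 * a) := hnum
      _ ≤ (8 * l + 4 * l ^ (2 * a)) * (1 - l) ^ (a + 1) := by nlinarith [hl.1]
      _ = (8 * (l ^ (-a) * l ^ (a + 1)) + 4 * (l ^ (a - 1) * l ^ (a + 1))) * (1 - l) ^ (a + 1) := by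
        rw [e1, e2]
      _ = _ := by ring
  have hg : IntervalIntegrable (fun x : ℝ => x ^ (-a) * (1 - x) ^ (-a)) volume 0 (1 / 2) :=
    (intervalIntegrable_rpow_mul_one_sub_rpow (by linarith) (by linarith)).mono_set
      (uIcc_subset_uIcc (by simp) (by
        rw [uIcc_of_le zero_le_one]; constructor <;> norm_num))
  have hFTC := intervalIntegral.integral_eq_sub_of_hasDerivAt_of_tendsto
    (show (0 : ℝ) < 1 / 2 by norm_num)
    (f := fun l : ℝ => l ^ (-a) * (1 - l) ^ (-a) *
      (1 - 2 * l - (1 - l) ^ (2 * a) + l ^ (2 * a)) / a) (fa := 0) (fb := 0)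
    (f' := fun l => ((1 - l) ^ (2 * a) + l ^ (2 * a) - 1) / (l ^ (a + 1) * (1 - l) ^ (a + 1))
      + (4 * a - 2) / a * (l ^ (-a) * (1 - l) ^ (-a))) ?_ (hf.add (hg.const_mul _)) ?_ ?_
  · rw [intervalIntegral.integral_add hf (hg.const_mul _), intervalIntegral.integral_const_mul,
      integral_zero_half_rpow_mul_one_sub_rpow (by linarith),
      integral_rpow_mul_one_sub_rpow (by linarith) (by linarith),
      intervalIntegral.integral_of_le (by norm_num), integral_Ioc_eq_integral_Ioo,
      show -a + 1 = 1 - a by ring, show -a + -a + 2 = 2 - 2 * a by ring] at hFTC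
    linear_combination hFTC
  · intro l hl
    have hl0 : 0 < l := hl.1
    have hv : 0 < 1 - l := by linarith [hl.2]
    have d1 := Real.hasDerivAt_rpow_const (x := l) (p := -a) (Or.inl hl0.ne')
    have d2 := ((hasDerivAt_id l).const_sub 1).rpow_const (p := -a) (Or.inl hv.ne')
    have d3 := ((hasDerivAt_id l).const_sub 1).rpow_const (p := 2 * a) (Or.inl hv.ne')
    have d4 := Real.hasDerivAt_rpow_const (x := l) (p := 2 * a) (Or.inl hl0.ne')
    have d5 := ((hasDerivAt_id l).const_mul 2).const_sub 1
    convert! ((d1.mul d2).mul ((d5.sub d3).add d4)).div_const a using 1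
    have p1 : l ^ (2 * a) = l ^ a * l ^ a := by rw [← Real.rpow_add hl0]; ring_nf
    have p2 : (1 - l) ^ (2 * a) = (1 - l) ^ a * (1 - l) ^ a := by
      rw [← Real.rpow_add hv]; ring_nf
    have q1 := Real.rpow_pos_of_pos hl0 a
    have q2 := Real.rpow_pos_of_pos hv a
    simp only [id, Pi.mul_apply, Pi.sub_apply, Pi.add_apply]
    rw [Real.rpow_sub_one hl0.ne', Real.rpow_sub_one hv.ne', Real.rpow_sub_one hl0.ne',
      Real.rpow_sub_one hv.ne', Real.rpow_add_one hl0.ne', Real.rpow_add_one hv.ne',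
      Real.rpow_neg hl0.le, Real.rpow_neg hv.le, p1, p2]
    field_simp
    ring
  · refine tendsto_zero_of_abs_le_rpow (C := 4 / a) (D := 2 / a) (r := 1 - a) (s := a)
      (by linarith) (by linarith) (show (0 : ℝ) < 1 / 2 by norm_num) fun l hl => ?_
    have hb := one_sub_one_sub_rpow_mem_Icc (p := 2 * a) (by linarith) (hmem hl)
    have hv : 0 < 1 - l := by linarith [hl.2]
    have q1 := Real.rpow_pos_of_pos hl.1 (-a)
    have q2 := Real.rpow_pos_of_pos hv (-a)
    have q3 := Real.rpow_pos_of_pos hl.1 (2 * a)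
    have htwo : (1 - l) ^ (-a) ≤ 2 := by
      have := Real.rpow_le_rpow_of_exponent_ge hv (by linarith [hl.1])
        (show -1 ≤ -a by linarith)
      rw [Real.rpow_neg_one] at this
      refine this.trans (inv_le_of_inv_le₀ two_pos ?_)
      linarith [hl.2]
    have e1 : l ^ (1 - a) = l ^ (-a) * l := by
      rw [← Real.rpow_add_one hl.1.ne']; ring_nf
    have e2 : l ^ a = l ^ (-a) * l ^ (2 * a) := by
      rw [← Real.rpow_add hl.1]; ring_nf
    have hnum : |1 - 2 * l - (1 - l) ^ (2 * a) + l ^ (2 * a)| ≤ 2 * l + l ^ (2 * a) := by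
      have := mul_le_mul_of_nonneg_right h2.le hl.1.le
      rw [abs_le]
      constructor <;> linarith [hb.1, hb.2, hl.1]
    rw [abs_div, abs_of_pos h0, div_le_iff₀ h0, abs_mul, abs_mul, abs_of_pos q1, abs_of_pos q2,
      e1, e2]
    calc l ^ (-a) * (1 - l) ^ (-a) * |1 - 2 * l - (1 - l) ^ (2 * a) + l ^ (2 * a)|
        ≤ l ^ (-a) * 2 * (2 * l + l ^ (2 * a)) := by gcongr
      _ = _ := by field_simp; ring
  · have hc : ContinuousAt (fun l : ℝ => l ^ (-a) * (1 - l) ^ (-a) *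
        (1 - 2 * l - (1 - l) ^ (2 * a) + l ^ (2 * a)) / a) (1 / 2) := by
      have c0 : ContinuousAt (fun l : ℝ => 1 - l) (1 / 2) := by fun_prop
      have c1 : ∀ p : ℝ, ContinuousAt (fun l : ℝ => l ^ p) (1 / 2) := fun p =>
        Real.continuousAt_rpow_const _ p (Or.inl (by norm_num))
      have c2 : ∀ p : ℝ, ContinuousAt (fun l : ℝ => (1 - l) ^ p) (1 / 2) := fun p =>
        c0.rpow_const (Or.inl (by norm_num))
      have c3 : ContinuousAt (fun l : ℝ => 1 - 2 * l) (1 / 2) := by fun_prop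
      exact (((c1 _).mul (c2 _)).mul ((c3.sub (c2 _)).add (c1 _))).div_const a
    have := hc.tendsto.mono_left (nhdsWithin_le_nhds (s := Iio (1 / 2)))
    convert! this using 2
    norm_num

/-- Consequence of the reflection formula at `a` and `2 * a`. -/
theorem Gamma_reflection_ratio {a : ℝ} (ha : a ∈ Ioo (1 / 2 : ℝ) 1) :
    -((2 * a - 1) / a) * (Real.Gamma (1 - a) * Real.Gamma (1 - a) / Real.Gamma (2 - 2 * a)) =
      Real.cos (Real.pi * a) *
        (2 * (Real.Gamma (1 - a) * Real.Gamma (2 * a) / Real.Gamma (1 + a))) := by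
  obtain ⟨h1, h2⟩ := ha
  have h0 : 0 < a := by linarith
  have hpi := Real.pi_pos
  have hs : Real.sin (Real.pi * a) ≠ 0 :=
    (Real.sin_pos_of_pos_of_lt_pi (by positivity) (by nlinarith)).ne'
  have hc : Real.cos (Real.pi * a) ≠ 0 :=
    (Real.cos_neg_of_pi_div_two_lt_of_lt (by nlinarith) (by nlinarith)).ne
  have r1 := Real.Gamma_mul_Gamma_one_sub a
  have r2 := Real.Gamma_mul_Gamma_one_sub (2 * a)
  rw [show Real.pi * (2 * a) = 2 * (Real.pi * a) by ring, Real.sin_two_mul] at r2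
  have g1 : Real.Gamma (2 - 2 * a) = (1 - 2 * a) * Real.Gamma (1 - 2 * a) := by
    rw [← Real.Gamma_add_one (by linarith)]; ring_nf
  have g2 : Real.Gamma (1 + a) = a * Real.Gamma a := by
    rw [← Real.Gamma_add_one h0.ne']; ring_nf
  have n1 := (Real.Gamma_pos_of_pos (show 0 < 2 - 2 * a by linarith)).ne'
  have n2 := (Real.Gamma_pos_of_pos h0).ne'
  have hkey : (1 - 2 * a) * (Real.Gamma a * Real.Gamma (1 - a)) =
      2 * Real.cos (Real.pi * a) * (Real.Gamma (2 * a) * Real.Gamma (2 - 2 * a)) := by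
    rw [g1, show Real.Gamma (2 * a) * ((1 - 2 * a) * Real.Gamma (1 - 2 * a)) =
      (1 - 2 * a) * (Real.Gamma (2 * a) * Real.Gamma (1 - 2 * a)) by ring, r1, r2]
    generalize Real.sin (Real.pi * a) = s at hs ⊢
    generalize Real.cos (Real.pi * a) = c at hc ⊢
    field_simp
  rw [g2]
  generalize Real.cos (Real.pi * a) = c at hkey ⊢
  generalize Real.Gamma (2 - 2 * a) = G at hkey n1 ⊢
  field_simp
  linear_combination hkey

open MeasureTheory

/-- For `α' ∈ (1/2,1)`,
`∫₀^{1/2} ((1−l)^{2α'} + l^{2α'} − 1)/(l^{α'+1}(1−l)^{α'+1}) dl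
  = cos(πα') · ∫₀^∞ ((1+l)^{2α'} + l^{2α'} − 1)/(l^{α'+1}(1+l)^{α'+1}) dl`;
equivalently, for `A₊, A₋ > 0`, `A₊·I₁ + A₋·I₂ = 0` iff `A₊/A₋ = −cos(πα')`. -/
theorem conservation_identity_ratio (α' : ℝ) (hα' : α' ∈ Set.Ioo (1 / 2 : ℝ) 1) :
    (∫ l in Set.Ioo (0 : ℝ) (1 / 2),
        ((1 - l) ^ (2 * α') + l ^ (2 * α') - 1) / (l ^ (α' + 1) * (1 - l) ^ (α' + 1))) =
      Real.cos (Real.pi * α') *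
        ∫ l in Set.Ioi (0 : ℝ),
          ((1 + l) ^ (2 * α') + l ^ (2 * α') - 1) / (l ^ (α' + 1) * (1 + l) ^ (α' + 1)) ∧
    ∀ Aplus Aminus : ℝ, 0 < Aplus → 0 < Aminus →
      (Aplus * (∫ l in Set.Ioi (0 : ℝ),
          ((1 + l) ^ (2 * α') + l ^ (2 * α') - 1) / (l ^ (α' + 1) * (1 + l) ^ (α' + 1))) +
        Aminus * (∫ l in Set.Ioo (0 : ℝ) (1 / 2),
          ((1 - l) ^ (2 * α') + l ^ (2 * α') - 1) / (l ^ (α' + 1) * (1 - l) ^ (α' + 1)))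
        = 0 ↔
      Aplus / Aminus = -Real.cos (Real.pi * α')) := by
  have hI₁ := integral_Ioi_conservation hα'
  have hI₂ := integral_Ioo_zero_half_conservation hα'
  rw [Gamma_reflection_ratio hα', ← hI₁] at hI₂
  have hpos : 0 < ∫ l in Ioi (0 : ℝ),
      ((1 + l) ^ (2 * α') + l ^ (2 * α') - 1) / (l ^ (α' + 1) * (1 + l) ^ (α' + 1)) := by
    obtain ⟨h1, h2⟩ := hα'
    have := Real.Gamma_pos_of_pos (show 0 < 1 - α' by linarith)
    have := Real.Gamma_pos_of_pos (show 0 < 2 * α' by linarith)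
    have := Real.Gamma_pos_of_pos (show 0 < 1 + α' by linarith)
    rw [hI₁]
    positivity
  refine ⟨hI₂, fun Aplus Aminus _ hm => ?_⟩
  rw [hI₂, div_eq_iff hm.ne']
  constructor
  · intro h
    refine mul_right_cancel₀ hpos.ne' ?_
    linear_combination h
  · intro h
    rw [h]
    ring
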